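/- Let γ be a real number with 0 < γ < 1 and let H be a real number with H ≥ 1. Then for every natural number T, ∑_{t=1}^{T} 2H · min(1, H·γ^t) ≤ 2H·(log H + 1)/(1−γ). -/

import Mathlib

theorem gap_aux (γ : ℝ) (hγ0 : 0 < γ) (hγ1 : γ < 1) (T : ℕ) : ∀ H : ℝ, 1 ≤ H →
    (∑ t ∈ Finset.range T, min 1 (H * γ ^ (t + 1))) * (1 - γ) ≤ Real.log H + 1 := by
  induction T with
  | zero =>
    intro H hH
    have := Real.log_nonneg hH
    simp
    linarith
  | succ T ih =>
    intro H hH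
    have hl := Real.log_nonneg hH
    rcases le_or_gt 1 (H * γ) with h | h
    · have h1 := ih (H * γ) h
      rw [Real.log_mul (by linarith) hγ0.ne'] at h1
      have h2 := Real.log_le_sub_one_of_pos hγ0
      have h3 : min 1 (H * γ ^ (0 + 1)) ≤ 1 := min_le_left _ _
      have h4 : ∑ t ∈ Finset.range T, min 1 (H * γ ^ (t + 1 + 1))
          = ∑ t ∈ Finset.range T, min 1 (H * γ * γ ^ (t + 1)) := by
        refine Finset.sum_congr rfl fun t _ => ?_
        congr 1
        ring
      rw [Finset.sum_range_succ', h4, add_mul]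
      nlinarith
    · have h1 : ∑ t ∈ Finset.range (T + 1), min 1 (H * γ ^ (t + 1))
          ≤ H * γ * ∑ t ∈ Finset.range (T + 1), γ ^ t := by
        rw [Finset.mul_sum]
        refine Finset.sum_le_sum fun t _ => (min_le_right _ _).trans (le_of_eq ?_)
        ring
      have h2 := geom_sum_mul_neg γ (T + 1)
      have h3 : 0 < γ ^ (T + 1) := by positivity
      have h5 : 0 < H * γ := by positivity
      have h4 := mul_le_mul_of_nonneg_right h1 (sub_nonneg.2 hγ1.le)
      rw [mul_assoc (H * γ), h2] at h4
      nlinarith [mul_pos h5 h3]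

/-- Refined cumulative performance-gap bound in Theorem 1: for `γ ∈ (0,1)` and `H ≥ 1`,
`∑_{t=1}^{T} 2H · min(1, H·γ^t) ≤ 2H·(log H + 1)/(1-γ)`. -/
theorem cumulative_gap_le
    (γ : ℝ) (hγ0 : 0 < γ) (hγ1 : γ < 1) (H : ℝ) (hH : 1 ≤ H) (T : ℕ) :
    ∑ t ∈ Finset.Icc 1 T, 2 * H * min 1 (H * γ ^ t)
      ≤ 2 * H * (Real.log H + 1) / (1 - γ) := by
  have h := gap_aux γ hγ0 hγ1 T H hH
  have e : ∑ t ∈ Finset.Icc 1 T, min 1 (H * γ ^ t)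
      = ∑ t ∈ Finset.range T, min 1 (H * γ ^ (t + 1)) := by
    rw [Finset.range_eq_Ico, Finset.sum_Ico_add' (fun t => min 1 (H * γ ^ t)) 0 T 1]
    rfl
  rw [← Finset.mul_sum, e, le_div_iff₀ (by linarith), mul_assoc]
  exact mul_le_mul_of_nonneg_left h (by linarith)
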